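/- Let μ be a subexponential probability measure on ℝ with tail F̄(x) := μ((x,∞)). Then for every a > 0, F̄(x+y)/F̄(x) → 1 as x → ∞ uniformly in y ∈ [-a, a]; that is, sup_{y ∈ [-a,a]} |F̄(x+y)/F̄(x) − 1| → 0 as x → ∞. -/

import Mathlib

/-!
Write `X, Y` for independent variables with law `μ`. For `0 < a ≤ x` the event `X + Y > x` contains
the disjoint events `{X > x, Y > 0}`, `{0 < X ≤ a, Y > x}` and `{a < X ≤ x, Y > x - a}`, which gives
`(μ∗μ)(x,∞) ≥ F̄(x) + F(a) F̄(x) + (F̄(a) - F̄(x)) F̄(x - a)` (`tail_conv_lower_bound`).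
Dividing by `F̄(x)`, subexponentiality and `F̄(a) > 0` force `limsup F̄(x - a) / F̄(x) ≤ 1`, hence the
limit is `1` by monotonicity (`tendsto_tail_sub_div`). Inverting and shifting gives the limit of
`F̄(x + a) / F̄(x)`, and monotonicity of `F̄` traps all `y ∈ [-a, a]` between these two ratios.
-/

open MeasureTheory Filter Set

/-- A probability measure `μ` on `ℝ` (concentrated on `(0,∞)`) is subexponential if its
tail is positive and the tail of `μ ∗ μ` is asymptotic to twice the tail of `μ`. -/
def Subexponential (μ : Measure ℝ) : Prop :=
  (∀ x > (0 : ℝ), 0 < μ (Ioi x)) ∧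
    Tendsto (fun x : ℝ => ((μ.conv μ) (Ioi x)).toReal / (μ (Ioi x)).toReal)
      atTop (nhds 2)

lemma tail_conv_lower_bound (μ : Measure ℝ) [IsProbabilityMeasure μ] (hμ : μ (Ioi 0) = 1)
    {a x : ℝ} (ha : 0 < a) (hx : a ≤ x) :
    μ.real (Ioi x) + (1 - μ.real (Ioi a)) * μ.real (Ioi x)
      + (μ.real (Ioi a) - μ.real (Ioi x)) * μ.real (Ioi (x - a))
      ≤ (μ.conv μ).real (Ioi x) := by
  have h0 : μ.real (Ioi 0) = 1 := by simp [measureReal_def, hμ]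
  have hdiff : ∀ {u v : ℝ}, u ≤ v →
      μ.real (Ioc u v) = μ.real (Ioi u) - μ.real (Ioi v) := by
    intro u v huv
    rw [← Ioi_sdiff_Ioi]
    exact measureReal_sdiff (Ioi_subset_Ioi huv) measurableSet_Ioi
  have hconv : (μ.conv μ).real (Ioi x)
      = (μ.prod μ).real ((fun p : ℝ × ℝ => p.1 + p.2) ⁻¹' Ioi x) := by
    rw [Measure.conv, map_measureReal_apply (by fun_prop) measurableSet_Ioi]
  have hsub : ((Ioi x ×ˢ Ioi (0 : ℝ)) ∪ (Ioc 0 a ×ˢ Ioi x)) ∪ (Ioc a x ×ˢ Ioi (x - a))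
      ⊆ (fun p : ℝ × ℝ => p.1 + p.2) ⁻¹' Ioi x := by
    rintro ⟨s, t⟩ h
    simp only [mem_union, mem_prod, mem_Ioi, mem_Ioc, mem_preimage] at h ⊢
    rcases h with (⟨h1, h2⟩ | ⟨⟨h1, h2⟩, h3⟩) | ⟨⟨h1, h2⟩, h3⟩ <;> linarith
  have hd1 : Disjoint (Ioi x ×ˢ Ioi (0 : ℝ)) (Ioc 0 a ×ˢ Ioi x) := by
    rw [Set.disjoint_left]
    rintro ⟨s, t⟩ h h'
    simp only [mem_prod, mem_Ioi, mem_Ioc] at h h'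
    linarith [h.1, h'.1.2]
  have hd2 : Disjoint ((Ioi x ×ˢ Ioi (0 : ℝ)) ∪ (Ioc 0 a ×ˢ Ioi x))
      (Ioc a x ×ˢ Ioi (x - a)) := by
    rw [Set.disjoint_left]
    rintro ⟨s, t⟩ h h'
    simp only [mem_union, mem_prod, mem_Ioi, mem_Ioc] at h h'
    rcases h with h | h
    · linarith [h.1, h'.1.2]
    · linarith [h.1.2, h'.1.1]
  have hle := measureReal_mono (μ := μ.prod μ) hsub
  rw [measureReal_union hd2 (measurableSet_Ioc.prod measurableSet_Ioi),
    measureReal_union hd1 (measurableSet_Ioc.prod measurableSet_Ioi),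
    measureReal_prod_prod, measureReal_prod_prod, measureReal_prod_prod,
    hdiff ha.le, hdiff hx, h0] at hle
  rw [hconv]
  linarith

lemma tail_pos {μ : Measure ℝ} [IsProbabilityMeasure μ] (hsub : Subexponential μ) (x : ℝ) :
    0 < μ.real (Ioi x) := by
  refine ENNReal.toReal_pos (ne_of_gt ?_) (measure_ne_top _ _)
  exact (hsub.1 (max x 1) (by positivity)).trans_le
    (measure_mono (Ioi_subset_Ioi (le_max_left _ _)))

lemma tail_antitone (μ : Measure ℝ) [IsProbabilityMeasure μ] :
    Antitone fun x => μ.real (Ioi x) :=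
  fun _ _ h => measureReal_mono (Ioi_subset_Ioi h)

lemma tendsto_tail_zero (μ : Measure ℝ) [IsProbabilityMeasure μ] :
    Tendsto (fun x => μ.real (Ioi x)) atTop (nhds 0) := by
  have h := tendsto_measure_iInter_atTop (μ := μ) (s := fun x : ℝ => Ioi x)
    (fun _ => measurableSet_Ioi.nullMeasurableSet) (fun _ _ h => Ioi_subset_Ioi h)
    ⟨0, measure_ne_top _ _⟩
  have he : (⋂ x : ℝ, Ioi x) = ∅ := by
    ext y
    simpa using ⟨y, le_rfl⟩
  rw [he, measure_empty] at h
  simpa [measureReal_def, Function.comp_def] using (ENNReal.tendsto_toReal ENNReal.zero_ne_top).comp h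

lemma tendsto_tail_sub_div (μ : Measure ℝ) [IsProbabilityMeasure μ] (hμ : μ (Ioi 0) = 1)
    (hsub : Subexponential μ) {a : ℝ} (ha : 0 < a) :
    Tendsto (fun x => μ.real (Ioi (x - a)) / μ.real (Ioi x)) atTop (nhds 1) := by
  have hp := tail_pos hsub a
  have hc : Tendsto (fun x => (μ.conv μ).real (Ioi x) / μ.real (Ioi x)) atTop (nhds 2) := hsub.2
  have hlim : Tendsto (fun x => ((μ.conv μ).real (Ioi x) / μ.real (Ioi x) - 2 + μ.real (Ioi a))
      / (μ.real (Ioi a) - μ.real (Ioi x))) atTop (nhds 1) := by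
    have := ((hc.sub_const 2).add_const (μ.real (Ioi a))).div
      ((tendsto_tail_zero μ).const_sub (μ.real (Ioi a))) (by simpa using hp.ne')
    simpa [div_self hp.ne', Pi.div_def] using this
  refine tendsto_of_tendsto_of_tendsto_of_le_of_le' tendsto_const_nhds hlim ?_ ?_
  · refine Eventually.of_forall fun x => ?_
    rw [one_le_div (tail_pos hsub x)]
    exact tail_antitone μ (by linarith)
  · filter_upwards [eventually_ge_atTop a, (tendsto_tail_zero μ).eventually_lt_const hp]
      with x hx hlt
    have hg := tail_pos hsub x
    have hb := tail_conv_lower_bound μ hμ ha hx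
    rw [le_div_iff₀ (by linarith), div_mul_eq_mul_div, div_le_iff₀ hg, add_mul, sub_mul,
      div_mul_cancel₀ _ hg.ne']
    linarith

theorem stmt2 (μ : Measure ℝ) [IsProbabilityMeasure μ] (hμ : μ (Ioi 0) = 1)
    (hsub : Subexponential μ) (a : ℝ) (ha : 0 < a) :
    Tendsto (fun x : ℝ =>
        ⨆ y ∈ Icc (-a) a, |(μ (Ioi (x + y))).toReal / (μ (Ioi x)).toReal - 1|)
      atTop (nhds 0) := by
  have hR := tendsto_tail_sub_div μ hμ hsub ha
  have hS : Tendsto (fun x => μ.real (Ioi (x + a)) / μ.real (Ioi x)) atTop (nhds 1) := by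
    have := (hR.comp (tendsto_atTop_add_const_right atTop a tendsto_id)).inv₀ one_ne_zero
    simpa [Function.comp_def] using this
  have hlim : Tendsto (fun x => (μ.real (Ioi (x - a)) / μ.real (Ioi x) - 1)
      + (1 - μ.real (Ioi (x + a)) / μ.real (Ioi x))) atTop (nhds 0) := by
    simpa using (hR.sub_const 1).add (hS.const_sub 1)
  refine squeeze_zero (fun x => ?_) (fun x => ?_) hlim
  · exact Real.iSup_nonneg fun y => Real.iSup_nonneg fun _ => abs_nonneg _
  · have hg := tail_pos hsub x
    have h1 : 1 ≤ μ.real (Ioi (x - a)) / μ.real (Ioi x) := by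
      rw [one_le_div hg]
      exact tail_antitone μ (by linarith)
    have h2 : μ.real (Ioi (x + a)) / μ.real (Ioi x) ≤ 1 := by
      rw [div_le_one hg]
      exact tail_antitone μ (by linarith)
    -- For `y ∉ [-a, a]` the inner supremum is over an empty type and equals `0`,
    -- so the bound must also be nonnegative.
    refine Real.iSup_le (fun y => Real.iSup_le (fun hy => ?_) (by linarith)) (by linarith)
    have h3 : μ.real (Ioi (x + y)) / μ.real (Ioi x) ≤ μ.real (Ioi (x - a)) / μ.real (Ioi x) :=
      div_le_div_of_nonneg_right (tail_antitone μ (by linarith [hy.1])) hg.le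
    have h4 : μ.real (Ioi (x + a)) / μ.real (Ioi x) ≤ μ.real (Ioi (x + y)) / μ.real (Ioi x) :=
      div_le_div_of_nonneg_right (tail_antitone μ (by linarith [hy.2])) hg.le
    change |μ.real (Ioi (x + y)) / μ.real (Ioi x) - 1| ≤ _
    rw [abs_le]
    constructor <;> linarith
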